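/- Suppose (Ω_i, 𝒜_i) = (ℝ, ℬ(ℝ)) for all i = 1,…,n, let P* ∈ ℙ and let c : ℝ^n → [0,∞] be Borel measurable. Let K_3 = {P ∈ M : P ≪ P* and (π_1,…,π_n) is a P-martingale}. If K_3 ≠ ∅, then K_3 is compact and there exists P ∈ K_3 such that P(c) = inf_{Q ∈ K_3} Q(c). -/

import Mathlib

open MeasureTheory Set ENNReal

namespace FATransport

variable {α : Type*} [MeasurableSpace α]

/-- The collection of measurable sets of `α` (the σ-field `𝒜`), as a type. -/
abbrev MSet (α : Type*) [MeasurableSpace α] := {A : Set α // MeasurableSet A}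

/-- A finitely additive probability on the σ-field of `α`, viewed as an element
of `[0,1]^𝒜`: it maps the whole space to `1` and is additive on disjoint pairs. -/
def IsFAP (P : MSet α → unitInterval) : Prop :=
  (P ⟨Set.univ, MeasurableSet.univ⟩ : ℝ) = 1 ∧
    ∀ A B : MSet α, Disjoint A.1 B.1 →
      (P ⟨A.1 ∪ B.1, A.2.union B.2⟩ : ℝ) = (P A : ℝ) + (P B : ℝ)

/-- `ℙ`, the set of all finitely additive probabilities on `𝒜`, as a subset of
`[0,1]^𝒜` (with its product topology). -/
def FAPs (α : Type*) [MeasurableSpace α] : Set (MSet α → unitInterval) :=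
  {P | IsFAP P}

/-- Integral of a simple function with respect to a finitely additive set function. -/
noncomputable def simpleInt (P : MSet α → unitInterval) (s : SimpleFunc α ℝ) : ℝ :=
  ∑ y ∈ s.range, y * (P ⟨(⇑s) ⁻¹' {y}, s.measurableSet_fiber y⟩ : ℝ)

/-- `P(f)` for a bounded measurable `f : α → ℝ`: the supremum of the integrals of
simple functions below `f` (for a f.a.p. `P` and bounded measurable `f` this agrees
with the integral defined by uniform approximation by simple functions). -/
noncomputable def fapInt (P : MSet α → unitInterval) (f : α → ℝ) : ℝ :=
  sSup (simpleInt P '' {s : SimpleFunc α ℝ | ∀ x, s x ≤ f x})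

/-- `P(c) = sup_k P(c ∧ k)` for a `[0,∞]`-valued `c`. -/
noncomputable def fapIntTop (P : MSet α → unitInterval) (c : α → ℝ≥0∞) : ℝ≥0∞ :=
  ⨆ k : ℕ, ENNReal.ofReal (fapInt P (fun x => (c x ⊓ (k : ℝ≥0∞)).toReal))

/-- A real-valued `f` is `P`-integrable iff `P(|f|) < ∞`. -/
def FapIntegrable (P : MSet α → unitInterval) (f : α → ℝ) : Prop :=
  fapIntTop P (fun x => ENNReal.ofReal |f x|) < ⊤

/-- `P(f) = P(f⁺) - P(f⁻)` for a (`P`-integrable) real-valued `f`. -/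
noncomputable def fapIntR (P : MSet α → unitInterval) (f : α → ℝ) : ℝ :=
  (fapIntTop P (fun x => ENNReal.ofReal (f x))).toReal -
    (fapIntTop P (fun x => ENNReal.ofReal (-f x))).toReal

/-- `P ≪ Q` for finitely additive probabilities. -/
def FapAC (P Q : MSet α → unitInterval) : Prop :=
  ∀ A : MSet α, (Q A : ℝ) = 0 → (P A : ℝ) = 0

variable {n : ℕ} {Ω : Fin n → Type*} [∀ i, MeasurableSpace (Ω i)]

/-- `M`, the set of finitely additive probabilities on `𝒜 = ⊗ᵢ 𝒜ᵢ` whose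
`i`-th marginal is `μ i` for every `i`. -/
def couplings (μ : ∀ i, Measure (Ω i)) : Set (MSet (∀ i, Ω i) → unitInterval) :=
  {P | IsFAP P ∧ ∀ (i : Fin n) (B : Set (Ω i)) (hB : MeasurableSet B),
    (P ⟨(fun ω => ω i) ⁻¹' B, (measurable_pi_apply i) hB⟩ : ℝ) = (μ i B).toReal}

end FATransport

namespace FATransport

/-- `(π_1, …, π_n)` is a `P`-martingale for a finitely additive probability `P` on
`ℬ(ℝⁿ)`: each `P(|π_i|) < ∞`, `P(π_1) = 0`, and `P((π_{i+1} - π_i) g(π_1,…,π_i)) = 0`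
for every bounded Borel `g` (encoded as a bounded Borel function on `ℝⁿ` depending
only on the first `i` coordinates). -/
def IsMartFAP {n : ℕ} (hn : 0 < n) (P : MSet (Fin n → ℝ) → unitInterval) : Prop :=
  (∀ i : Fin n, fapIntTop P (fun ω => ENNReal.ofReal |ω i|) < ⊤) ∧
    fapIntR P (fun ω => ω ⟨0, hn⟩) = 0 ∧
    ∀ i j : Fin n, (j : ℕ) = (i : ℕ) + 1 →
      ∀ g : (Fin n → ℝ) → ℝ, Measurable g → (∃ C, ∀ x, |g x| ≤ C) →
        (∀ x y : Fin n → ℝ, (∀ k : Fin n, k ≤ i → x k = y k) → g x = g y) →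
        fapIntR P (fun ω => (ω j - ω i) * g ω) = 0

end FATransport

namespace FATransport

/-!
Setwise limits of finitely additive probabilities are again such, so `[0,1]^𝒜` being compact, every
subset of `ℙ` cut out by closed conditions is compact. Integration of a bounded measurable function
is a uniform limit of finite combinations of evaluations `P ↦ P(A)`, hence continuous, and
`P ↦ P(c)` is a supremum of such maps, hence lower semicontinuous; this gives the minimizer.

The only delicate point is that the martingale constraints involve unbounded functions. The `i`-th
coordinate has the σ-additive law `μ i` under every `P ∈ M`, so its tails `P((|π_i| - k)⁺)` equal
`∫ (|x| - k)⁺ dμ i` and tend to zero uniformly over `M`. The integrands of the martingale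
constraints are dominated by multiples of `|π_i| + |π_j|`; their truncated integrals therefore
converge uniformly on `M`, and the constraints are closed.
-/

open Filter Topology

section Integral

variable {α : Type*} [MeasurableSpace α] {P : MSet α → unitInterval}

lemma IsFAP.empty (hP : IsFAP P) : (P ⟨∅, MeasurableSet.empty⟩ : ℝ) = 0 := by
  have h := hP.2 ⟨∅, MeasurableSet.empty⟩ ⟨∅, MeasurableSet.empty⟩ (disjoint_empty _)
  simpa only [union_empty, left_eq_add] using h

open Classical in
/-- The set function `A ↦ (y ↦ y * P A)`, extended by `0` to non-measurable sets: the form in which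
`SimpleFunc.setToSimpleFunc` expects `P`. -/
noncomputable def fapCLM (P : MSet α → unitInterval) (A : Set α) : ℝ →L[ℝ] ℝ :=
  if hA : MeasurableSet A then (P ⟨A, hA⟩ : ℝ) • ContinuousLinearMap.id ℝ ℝ else 0

lemma fapCLM_apply (P : MSet α → unitInterval) {A : Set α} (hA : MeasurableSet A) (y : ℝ) :
    fapCLM P A y = y * (P ⟨A, hA⟩ : ℝ) := by
  simp [fapCLM, hA, mul_comm]

lemma simpleInt_eq_setToSimpleFunc (P : MSet α → unitInterval) (s : SimpleFunc α ℝ) :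
    simpleInt P s = s.setToSimpleFunc (fapCLM P) :=
  Finset.sum_congr rfl fun y _ => (fapCLM_apply P (s.measurableSet_fiber y) y).symm

-- With the zero measure as reference, every simple function is integrable, so the results on
-- `setToSimpleFunc` apply to all of them.
lemma IsFAP.finMeasAdditive_fapCLM (hP : IsFAP P) :
    FinMeasAdditive (0 : Measure α) (fapCLM P) := by
  intro A B hA hB _ _ hAB
  ext
  simp only [add_apply, fapCLM_apply P hA, fapCLM_apply P hB, fapCLM_apply P (hA.union hB),
    hP.2 ⟨A, hA⟩ ⟨B, hB⟩ hAB, mul_add]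

lemma simpleInt_add (hP : IsFAP P) (s t : SimpleFunc α ℝ) :
    simpleInt P (s + t) = simpleInt P s + simpleInt P t := by
  simp only [simpleInt_eq_setToSimpleFunc]
  exact SimpleFunc.setToSimpleFunc_add _ hP.finMeasAdditive_fapCLM integrable_zero_measure
    integrable_zero_measure

lemma simpleInt_mono (hP : IsFAP P) {s t : SimpleFunc α ℝ} (hst : ∀ x, s x ≤ t x) :
    simpleInt P s ≤ simpleInt P t := by
  simp only [simpleInt_eq_setToSimpleFunc]
  refine SimpleFunc.setToSimpleFunc_mono hP.finMeasAdditive_fapCLM (fun A hA _ y hy => ?_)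
    integrable_zero_measure integrable_zero_measure hst
  rw [fapCLM_apply P hA]
  exact mul_nonneg hy (P _).2.1

lemma simpleInt_const (hP : IsFAP P) (r : ℝ) : simpleInt P (SimpleFunc.const α r) = r := by
  have hempty : fapCLM P ∅ = 0 := by
    ext
    rw [fapCLM_apply P MeasurableSet.empty, hP.empty, mul_zero, zero_apply]
  rw [simpleInt_eq_setToSimpleFunc, SimpleFunc.setToSimpleFunc_const _ hempty,
    fapCLM_apply P MeasurableSet.univ, hP.1, mul_one]

lemma simpleInt_le_add_of_le_add (hP : IsFAP P) {s t : SimpleFunc α ℝ} {r : ℝ}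
    (hst : ∀ x, s x ≤ t x + r) : simpleInt P s ≤ simpleInt P t + r :=
  calc simpleInt P s ≤ simpleInt P (t + SimpleFunc.const α r) := simpleInt_mono hP hst
    _ = simpleInt P t + r := by rw [simpleInt_add hP, simpleInt_const hP]

lemma simpleInt_le_fapInt (hP : IsFAP P) {f : α → ℝ} {C : ℝ} (hC : ∀ x, f x ≤ C)
    {s : SimpleFunc α ℝ} (hs : ∀ x, s x ≤ f x) : simpleInt P s ≤ fapInt P f := by
  refine le_csSup ⟨C, ?_⟩ ⟨s, hs, rfl⟩
  rintro _ ⟨t, ht, rfl⟩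
  calc simpleInt P t ≤ simpleInt P (SimpleFunc.const α C) :=
        simpleInt_mono hP fun x => (ht x).trans (hC x)
    _ = C := simpleInt_const hP C

lemma fapInt_mono (hP : IsFAP P) {f g : α → ℝ} {a b : ℝ} (ha : ∀ x, a ≤ f x)
    (hb : ∀ x, g x ≤ b) (hfg : ∀ x, f x ≤ g x) : fapInt P f ≤ fapInt P g := by
  refine csSup_le ⟨_, SimpleFunc.const α a, ha, rfl⟩ ?_
  rintro _ ⟨s, hs, rfl⟩
  exact simpleInt_le_fapInt hP hb fun x => (hs x).trans (hfg x)

lemma abs_fapInt_sub_simpleInt_le (hP : IsFAP P) {f : α → ℝ} {s : SimpleFunc α ℝ} {ε : ℝ}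
    (hs : ∀ x, |f x - s x| ≤ ε) : |fapInt P f - simpleInt P s| ≤ ε := by
  have hlow : ∀ x, (s + SimpleFunc.const α (-ε)) x ≤ f x := fun x => by
    simp only [SimpleFunc.coe_add, Pi.add_apply, SimpleFunc.const_apply]
    linarith [(abs_le.1 (hs x)).1]
  have hupp : ∀ t : SimpleFunc α ℝ, (∀ x, t x ≤ f x) → simpleInt P t ≤ simpleInt P s + ε :=
    fun t ht => simpleInt_le_add_of_le_add hP fun x => by linarith [ht x, (abs_le.1 (hs x)).2]
  have hge : simpleInt P s + -ε ≤ fapInt P f := by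
    rw [← simpleInt_const hP (-ε), ← simpleInt_add hP]
    exact le_csSup ⟨_, forall_mem_image.2 hupp⟩ ⟨_, hlow, rfl⟩
  have hle : fapInt P f ≤ simpleInt P s + ε :=
    csSup_le ⟨_, _, hlow, rfl⟩ (forall_mem_image.2 hupp)
  exact abs_le.2 ⟨by linarith, by linarith⟩

lemma exists_simpleFunc_abs_sub_le {f : α → ℝ} (hf : Measurable f) {C : ℝ}
    (hC : ∀ x, |f x| ≤ C) {ε : ℝ} (hε : 0 < ε) :
    ∃ s : SimpleFunc α ℝ, ∀ x, |f x - s x| ≤ ε := by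
  have hmeas : Measurable fun x => ε * (⌊f x / ε⌋ : ℝ) := by fun_prop
  have hfin : (range fun x => ε * (⌊f x / ε⌋ : ℝ)).Finite := by
    refine ((finite_Icc ⌊-C / ε⌋ ⌊C / ε⌋).image fun z : ℤ => ε * (z : ℝ)).subset ?_
    rintro _ ⟨x, rfl⟩
    obtain ⟨hlow, hupp⟩ := abs_le.1 (hC x)
    exact ⟨⌊f x / ε⌋, ⟨by gcongr, by gcongr⟩, rfl⟩
  refine ⟨⟨_, fun y => hmeas (measurableSet_singleton y), hfin⟩, fun x => ?_⟩
  have hfract : f x - ε * ⌊f x / ε⌋ = ε * Int.fract (f x / ε) := by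
    rw [Int.fract, mul_sub, mul_div_cancel₀ _ hε.ne']
  rw [SimpleFunc.coe_mk, hfract, abs_of_nonneg (by positivity)]
  exact mul_le_of_le_one_right hε.le (Int.fract_lt_one _).le

lemma fapInt_zero (hP : IsFAP P) : fapInt P (fun _ => 0) = 0 := by
  have h := abs_fapInt_sub_simpleInt_le hP (f := fun _ => 0) (s := SimpleFunc.const α 0) (ε := 0)
    (by simp)
  rwa [simpleInt_const hP, sub_zero, abs_nonpos_iff] at h

lemma fapInt_add (hP : IsFAP P) {f g : α → ℝ} (hf : Measurable f) (hg : Measurable g) {C D : ℝ}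
    (hC : ∀ x, |f x| ≤ C) (hD : ∀ x, |g x| ≤ D) :
    fapInt P (fun x => f x + g x) = fapInt P f + fapInt P g := by
  refine eq_of_forall_dist_le fun ε hε => ?_
  obtain ⟨s, hs⟩ := exists_simpleFunc_abs_sub_le hf hC (ε := ε / 4) (by positivity)
  obtain ⟨t, ht⟩ := exists_simpleFunc_abs_sub_le hg hD (ε := ε / 4) (by positivity)
  have hst : ∀ x, |f x + g x - (s + t) x| ≤ ε / 2 := fun x => by
    rw [SimpleFunc.coe_add, Pi.add_apply, add_sub_add_comm]
    linarith [abs_add_le (f x - s x) (g x - t x), hs x, ht x]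
  have hsum := abs_le.1 (abs_fapInt_sub_simpleInt_le hP hst)
  have hf' := abs_le.1 (abs_fapInt_sub_simpleInt_le hP hs)
  have hg' := abs_le.1 (abs_fapInt_sub_simpleInt_le hP ht)
  rw [simpleInt_add hP] at hsum
  rw [Real.dist_eq, abs_le]
  constructor <;> linarith

lemma toReal_inf_natCast_le (a : ℝ≥0∞) (k : ℕ) : (a ⊓ k).toReal ≤ k :=
  ENNReal.toReal_le_of_le_ofReal k.cast_nonneg (by simp)

lemma abs_toReal_inf_natCast_le (a : ℝ≥0∞) (k : ℕ) : |(a ⊓ k).toReal| ≤ k := by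
  rw [abs_of_nonneg ENNReal.toReal_nonneg]
  exact toReal_inf_natCast_le a k

lemma fapIntTop_mono (hP : IsFAP P) {c d : α → ℝ≥0∞} (hcd : ∀ x, c x ≤ d x) :
    fapIntTop P c ≤ fapIntTop P d :=
  iSup_mono fun k => ENNReal.ofReal_le_ofReal <|
    fapInt_mono hP (fun _ => ENNReal.toReal_nonneg) (fun x => toReal_inf_natCast_le (d x) k)
      fun x => ENNReal.toReal_mono (by simp) (inf_le_inf_right _ (hcd x))

lemma fapIntTop_zero (hP : IsFAP P) : fapIntTop P (fun _ => 0) = 0 := by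
  simp [fapIntTop, fapInt_zero hP]

lemma fapIntTop_inf_natCast (hP : IsFAP P) (c : α → ℝ≥0∞) (k : ℕ) :
    fapIntTop P (fun x => c x ⊓ k) = ENNReal.ofReal (fapInt P fun x => (c x ⊓ k).toReal) := by
  refine le_antisymm (iSup_le fun m => ENNReal.ofReal_le_ofReal ?_) ?_
  · exact fapInt_mono hP (fun _ => ENNReal.toReal_nonneg) (fun x => toReal_inf_natCast_le (c x) k)
      fun x => ENNReal.toReal_mono (by simp) inf_le_left
  · refine le_iSup_of_le k (le_of_eq ?_)
    simp only [inf_assoc, inf_idem]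

lemma fapIntTop_add_le (hP : IsFAP P) {c d : α → ℝ≥0∞} (hc : Measurable c) (hd : Measurable d) :
    fapIntTop P (fun x => c x + d x) ≤ fapIntTop P c + fapIntTop P d := by
  refine iSup_le fun k => ?_
  have htrunc : ∀ x, ((c x + d x) ⊓ k).toReal ≤ (c x ⊓ k).toReal + (d x ⊓ k).toReal := fun x => by
    rw [← ENNReal.toReal_add (by simp) (by simp)]
    exact ENNReal.toReal_mono (by simp) ((min_add_distrib' _ _ _).trans_le inf_le_left)
  have hle : fapInt P (fun x => ((c x + d x) ⊓ k).toReal) ≤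
      fapInt P (fun x => (c x ⊓ k).toReal) + fapInt P (fun x => (d x ⊓ k).toReal) := by
    rw [← fapInt_add hP (by fun_prop) (by fun_prop) (fun x => abs_toReal_inf_natCast_le (c x) k)
      fun x => abs_toReal_inf_natCast_le (d x) k]
    exact fapInt_mono hP (fun _ => ENNReal.toReal_nonneg)
      (fun x => add_le_add (toReal_inf_natCast_le (c x) k) (toReal_inf_natCast_le (d x) k)) htrunc
  calc _ ≤ ENNReal.ofReal (fapInt P fun x => (c x ⊓ k).toReal) +
        ENNReal.ofReal (fapInt P fun x => (d x ⊓ k).toReal) :=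
        (ENNReal.ofReal_le_ofReal hle).trans ENNReal.ofReal_add_le
    _ ≤ fapIntTop P c + fapIntTop P d :=
        add_le_add (le_iSup (fun k : ℕ => ENNReal.ofReal (fapInt P fun x => (c x ⊓ k).toReal)) k)
          (le_iSup (fun k : ℕ => ENNReal.ofReal (fapInt P fun x => (d x ⊓ k).toReal)) k)

lemma fapIntTop_le_inf_add_tsub (hP : IsFAP P) {c : α → ℝ≥0∞} (hc : Measurable c) (k : ℕ) :
    fapIntTop P c ≤ fapIntTop P (fun x => c x ⊓ k) + fapIntTop P (fun x => c x - k) :=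
  calc fapIntTop P c ≤ fapIntTop P (fun x => c x ⊓ k + (c x - k)) :=
        fapIntTop_mono hP fun x => by
          rcases le_total (c x) k with h | h
          · simp [h]
          · rw [inf_of_le_right h, add_tsub_cancel_of_le h]
    _ ≤ _ := fapIntTop_add_le hP (by fun_prop) (by fun_prop)

end Integral

section Continuity

variable {α : Type*} [MeasurableSpace α]

lemma continuous_eval (A : MSet α) : Continuous fun P : MSet α → unitInterval => (P A : ℝ) :=
  continuous_subtype_val.comp (continuous_apply A)

lemma continuous_simpleInt (s : SimpleFunc α ℝ) :
    Continuous fun P : MSet α → unitInterval => simpleInt P s :=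
  continuous_finsetSum _ fun _ _ => continuous_const.mul (continuous_eval _)

lemma continuousOn_fapInt {f : α → ℝ} (hf : Measurable f) {C : ℝ} (hC : ∀ x, |f x| ≤ C) :
    ContinuousOn (fun P => fapInt P f) (FAPs α) := by
  refine continuousOn_of_uniform_approx_of_continuousOn fun u hu => ?_
  obtain ⟨ε, hε, hεu⟩ := Metric.mem_uniformity_dist.1 hu
  obtain ⟨s, hs⟩ := exists_simpleFunc_abs_sub_le hf hC (half_pos hε)
  refine ⟨fun P => simpleInt P s, (continuous_simpleInt s).continuousOn, fun P hP => hεu ?_⟩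
  exact (abs_fapInt_sub_simpleInt_le hP hs).trans_lt (half_lt_self hε)

lemma continuousOn_fapInt_toReal_inf_natCast {c : α → ℝ≥0∞} (hc : Measurable c) (k : ℕ) :
    ContinuousOn (fun P => fapInt P fun x => (c x ⊓ k).toReal) (FAPs α) :=
  continuousOn_fapInt (by fun_prop) fun x => abs_toReal_inf_natCast_le (c x) k

lemma lowerSemicontinuousOn_fapIntTop {c : α → ℝ≥0∞} (hc : Measurable c) :
    LowerSemicontinuousOn (fun P => fapIntTop P c) (FAPs α) :=
  lowerSemicontinuousOn_iSup fun k => ContinuousOn.lowerSemicontinuousOn <|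
    ENNReal.continuous_ofReal.comp_continuousOn (continuousOn_fapInt_toReal_inf_natCast hc k)

lemma exists_fapIntTop_eq_iInf {K : Set (MSet α → unitInterval)} (hK : IsCompact K)
    (hne : K.Nonempty) (hKP : K ⊆ FAPs α) {c : α → ℝ≥0∞} (hc : Measurable c) :
    ∃ P ∈ K, fapIntTop P c = ⨅ Q ∈ K, fapIntTop Q c := by
  obtain ⟨P, hP, hmin⟩ := ((lowerSemicontinuousOn_fapIntTop hc).mono hKP).exists_isMinOn hne hK
  exact ⟨P, hP, le_antisymm (le_iInf₂ fun Q hQ => hmin hQ) (iInf₂_le P hP)⟩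

lemma isClosed_FAPs : IsClosed (FAPs α) := by
  simp only [FAPs, IsFAP, ofPred_and, ofPred_forall]
  exact (isClosed_eq (continuous_eval _) continuous_const).inter <|
    isClosed_iInter fun A => isClosed_iInter fun B => isClosed_iInter fun _ =>
      isClosed_eq (continuous_eval _) ((continuous_eval A).add (continuous_eval B))

lemma isClosed_setOf_fapAC (Q : MSet α → unitInterval) : IsClosed {P | FapAC P Q} := by
  simp only [FapAC, ofPred_forall]
  exact isClosed_iInter fun A => isClosed_iInter fun _ =>
    isClosed_eq (continuous_eval A) continuous_const

end Continuity

section UniformIntegrability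

variable {α : Type*} [MeasurableSpace α] {K : Set (MSet α → unitInterval)}

/-- Uniform integrability of `c : α → [0,∞]` over a set `K` of finitely additive probabilities. The
tail is measured by the truncated difference `c - k = (c - k)⁺`, the complement of the truncation
`c ∧ k` in `c`. -/
def UnifFapIntegrable (K : Set (MSet α → unitInterval)) (c : α → ℝ≥0∞) : Prop :=
  ∀ ε : ℝ≥0∞, ε ≠ 0 → ∃ k : ℕ, ∀ P ∈ K, fapIntTop P (fun x => c x - k) ≤ ε

lemma UnifFapIntegrable.mono (hKP : K ⊆ FAPs α) {c d : α → ℝ≥0∞} (hd : UnifFapIntegrable K d)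
    (hcd : ∀ x, c x ≤ d x) : UnifFapIntegrable K c := fun ε hε => by
  obtain ⟨k, hk⟩ := hd ε hε
  exact ⟨k, fun P hP =>
    (fapIntTop_mono (hKP hP) fun x => tsub_le_tsub_right (hcd x) _).trans (hk P hP)⟩

lemma UnifFapIntegrable.add (hKP : K ⊆ FAPs α) {c d : α → ℝ≥0∞} (hc : UnifFapIntegrable K c)
    (hd : UnifFapIntegrable K d) (hcm : Measurable c) (hdm : Measurable d) :
    UnifFapIntegrable K fun x => c x + d x := fun ε hε => by
  obtain ⟨k, hk⟩ := hc (ε / 2) (by simpa using hε)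
  obtain ⟨l, hl⟩ := hd (ε / 2) (by simpa using hε)
  refine ⟨k + l, fun P hP => ?_⟩
  calc fapIntTop P (fun x => c x + d x - (k + l : ℕ))
      ≤ fapIntTop P (fun x => (c x - k) + (d x - l)) := fapIntTop_mono (hKP hP) fun x => by
        rw [Nat.cast_add]
        exact add_tsub_add_le_tsub_add_tsub
    _ ≤ fapIntTop P (fun x => c x - k) + fapIntTop P (fun x => d x - l) :=
        fapIntTop_add_le (hKP hP) (by fun_prop) (by fun_prop)
    _ ≤ ε / 2 + ε / 2 := add_le_add (hk P hP) (hl P hP)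
    _ = ε := ENNReal.add_halves ε

lemma UnifFapIntegrable.natCast_mul (hKP : K ⊆ FAPs α) {c : α → ℝ≥0∞}
    (hc : UnifFapIntegrable K c) (hcm : Measurable c) (m : ℕ) :
    UnifFapIntegrable K fun x => m * c x := by
  induction m with
  | zero => exact fun ε _ => ⟨0, fun P hP => by simp [fapIntTop_zero (hKP hP)]⟩
  | succ m ih =>
    simp only [Nat.cast_succ, add_one_mul]
    exact ih.add hKP hc (by fun_prop) hcm

lemma UnifFapIntegrable.continuousOn_toReal_fapIntTop (hKP : K ⊆ FAPs α) {c : α → ℝ≥0∞}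
    (hc : UnifFapIntegrable K c) (hcm : Measurable c) :
    ContinuousOn (fun P => (fapIntTop P c).toReal) K := by
  refine continuousOn_of_uniform_approx_of_continuousOn fun u hu => ?_
  obtain ⟨ε, hε, hεu⟩ := Metric.mem_uniformity_dist.1 hu
  obtain ⟨k, hk⟩ := hc (ENNReal.ofReal (ε / 2)) (by simpa using hε)
  refine ⟨fun P => (ENNReal.ofReal (fapInt P fun x => (c x ⊓ k).toReal)).toReal, ?_,
    fun P hP => hεu ?_⟩
  · simp only [ENNReal.toReal_ofReal']
    exact ((continuousOn_fapInt_toReal_inf_natCast hcm k).mono hKP).sup continuousOn_const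
  simp only [← fapIntTop_inf_natCast (hKP hP)]
  have hfin : fapIntTop P (fun x => c x ⊓ k) ≠ ⊤ := by
    rw [fapIntTop_inf_natCast (hKP hP)]
    exact ENNReal.ofReal_ne_top
  have hle : fapIntTop P c ≤ fapIntTop P (fun x => c x ⊓ k) + ENNReal.ofReal (ε / 2) :=
    (fapIntTop_le_inf_add_tsub (hKP hP) hcm k).trans (by gcongr; exact hk P hP)
  have hfin_add := ENNReal.add_ne_top.2 ⟨hfin, ENNReal.ofReal_ne_top (r := ε / 2)⟩
  have hge_real := ENNReal.toReal_mono (ne_top_of_le_ne_top hfin_add hle)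
    (fapIntTop_mono (hKP hP) fun x => inf_le_left (a := c x) (b := (k : ℝ≥0∞)))
  have hle_real := ENNReal.toReal_mono hfin_add hle
  rw [ENNReal.toReal_add hfin ENNReal.ofReal_ne_top, ENNReal.toReal_ofReal (half_pos hε).le]
    at hle_real
  rw [Real.dist_eq, abs_lt]
  constructor <;> linarith

lemma UnifFapIntegrable.continuousOn_fapIntR (hKP : K ⊆ FAPs α) {f : α → ℝ}
    (hf : UnifFapIntegrable K fun x => ENNReal.ofReal |f x|) (hfm : Measurable f) :
    ContinuousOn (fun P => fapIntR P f) K :=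
  ((hf.mono hKP fun _ => ENNReal.ofReal_le_ofReal (le_abs_self _)).continuousOn_toReal_fapIntTop
    hKP (by fun_prop)).sub
  ((hf.mono hKP fun _ => ENNReal.ofReal_le_ofReal (neg_le_abs _)).continuousOn_toReal_fapIntTop
    hKP (by fun_prop))

lemma isClosed_setOf_forall_fapIntR_eq_zero (hK : IsClosed K) (hKP : K ⊆ FAPs α)
    {F : Set (α → ℝ)} (hFm : ∀ f ∈ F, Measurable f)
    (hF : ∀ f ∈ F, UnifFapIntegrable K fun x => ENNReal.ofReal |f x|) :
    IsClosed {P ∈ K | ∀ f ∈ F, fapIntR P f = 0} := by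
  have hset : {P ∈ K | ∀ f ∈ F, fapIntR P f = 0} =
      K ∩ ⋂ f ∈ F, K ∩ (fun P => fapIntR P f) ⁻¹' {0} := by
    ext P
    simp +contextual
  rw [hset]
  exact hK.inter <| isClosed_biInter fun f hf =>
    ((hF f hf).continuousOn_fapIntR hKP (hFm f hf)).preimage_isClosed_of_isClosed hK
      isClosed_singleton

end UniformIntegrability

section Law

variable {α E : Type*} [MeasurableSpace α] [MeasurableSpace E] {P : MSet α → unitInterval}
  {X : α → E} {ν : Measure E}

/-- Under the finitely additive `P`, the random variable `X` has the (σ-additive) law `ν`. -/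
def HasFapLaw (P : MSet α → unitInterval) (X : α → E) (ν : Measure E) : Prop :=
  ∃ hX : Measurable X, ∀ (B : Set E) (hB : MeasurableSet B), (P ⟨X ⁻¹' B, hX hB⟩ : ℝ) = ν.real B

lemma HasFapLaw.simpleInt_comp [IsFiniteMeasure ν] (hlaw : HasFapLaw P X ν)
    (s : SimpleFunc E ℝ) : simpleInt P (s.comp X hlaw.fst) = ∫ x, s x ∂ν := by
  obtain ⟨hX, hlaw⟩ := hlaw
  have hfiber : ∀ y, (P ⟨s.comp X hX ⁻¹' {y}, (s.comp X hX).measurableSet_fiber y⟩ : ℝ) =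
      ν.real (s ⁻¹' {y}) := fun y => hlaw _ (s.measurableSet_fiber y)
  have hout : ∀ y ∉ (s.comp X hX).range, ν.real (s ⁻¹' {y}) = 0 := fun y hy => by
    have hempty : X ⁻¹' (s ⁻¹' {y}) = X ⁻¹' ∅ := (s.comp X hX).preimage_eq_empty_iff y |>.2 hy
    rw [← hlaw _ (s.measurableSet_fiber y), ← measureReal_empty (μ := ν),
      ← hlaw _ MeasurableSet.empty]
    simp only [hempty]
  rw [SimpleFunc.integral_eq_sum s (SimpleFunc.integrable_of_isFiniteMeasure s), simpleInt]
  simp only [hfiber, smul_eq_mul, mul_comm]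
  exact Finset.sum_subset (s.range_comp_subset_range hX) fun y _ hy => by rw [hout y hy, mul_zero]

lemma HasFapLaw.fapInt_comp [IsProbabilityMeasure ν] (hlaw : HasFapLaw P X ν) (hP : IsFAP P)
    {f : E → ℝ} (hf : Measurable f) {C : ℝ} (hC : ∀ x, |f x| ≤ C) :
    fapInt P (fun ω => f (X ω)) = ∫ x, f x ∂ν := by
  refine eq_of_forall_dist_le fun ε hε => ?_
  obtain ⟨s, hs⟩ := exists_simpleFunc_abs_sub_le hf hC (half_pos hε)
  have hP_close : |fapInt P (fun ω => f (X ω)) - ∫ x, s x ∂ν| ≤ ε / 2 := by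
    rw [← hlaw.simpleInt_comp s]
    exact abs_fapInt_sub_simpleInt_le hP fun ω => hs (X ω)
  have hν_close : |∫ x, f x ∂ν - ∫ x, s x ∂ν| ≤ ε / 2 := by
    rw [← integral_sub (.of_bound hf.aestronglyMeasurable C (.of_forall hC))
      (SimpleFunc.integrable_of_isFiniteMeasure s)]
    simpa using norm_integral_le_of_norm_le_const (μ := ν) (f := fun x => f x - s x)
      (.of_forall hs)
  calc dist (fapInt P fun ω => f (X ω)) (∫ x, f x ∂ν)
      ≤ |fapInt P (fun ω => f (X ω)) - ∫ x, s x ∂ν| + |∫ x, f x ∂ν - ∫ x, s x ∂ν| :=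
        dist_triangle_right _ _ _
    _ ≤ ε := by linarith

lemma HasFapLaw.fapIntTop_comp [IsProbabilityMeasure ν] (hlaw : HasFapLaw P X ν) (hP : IsFAP P)
    {c : E → ℝ≥0∞} (hc : Measurable c) :
    fapIntTop P (fun ω => c (X ω)) = ∫⁻ x, c x ∂ν := by
  have htrunc : ∀ k : ℕ, ENNReal.ofReal (fapInt P fun ω => (c (X ω) ⊓ k).toReal) =
      ∫⁻ x, c x ⊓ k ∂ν := fun k => by
    have hlt : ∀ x, c x ⊓ k < ⊤ := fun x => inf_le_right.trans_lt (ENNReal.natCast_lt_top k)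
    have hle : ∫⁻ x, c x ⊓ k ∂ν ≤ k := by
      simpa using lintegral_mono (μ := ν) fun x => inf_le_right (a := c x) (b := (k : ℝ≥0∞))
    rw [hlaw.fapInt_comp hP (f := fun x => (c x ⊓ k).toReal) (by fun_prop)
      fun x => abs_toReal_inf_natCast_le (c x) k,
      integral_toReal (by fun_prop) (.of_forall hlt),
      ENNReal.ofReal_toReal (ne_top_of_le_ne_top (ENNReal.natCast_ne_top k) hle)]
  simp only [fapIntTop, htrunc]
  rw [← lintegral_iSup (f := fun (k : ℕ) x => c x ⊓ k) (fun k => by fun_prop)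
    fun k l hkl x => inf_le_inf_left _ (Nat.cast_le.2 hkl)]
  simp only [← inf_iSup_eq, ENNReal.iSup_natCast, inf_top_eq]

lemma exists_lintegral_tsub_natCast_le {c : E → ℝ≥0∞} (hc : Measurable c)
    (hfinite : ∫⁻ x, c x ∂ν ≠ ⊤) {ε : ℝ≥0∞} (hε : ε ≠ 0) :
    ∃ k : ℕ, ∫⁻ x, c x - k ∂ν ≤ ε := by
  have hlim : Tendsto (fun k : ℕ => ∫⁻ x, c x - k ∂ν) atTop (𝓝 (∫⁻ _, 0 ∂ν)) := by
    refine tendsto_lintegral_of_dominated_convergence c (fun k => by fun_prop)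
      (fun k => .of_forall fun x => tsub_le_self) hfinite ?_
    filter_upwards [ae_lt_top hc hfinite] with x hx
    obtain ⟨m, hm⟩ := ENNReal.exists_nat_gt hx.ne
    refine tendsto_const_nhds.congr' ?_
    filter_upwards [eventually_ge_atTop m] with k hk
    exact (tsub_eq_zero_of_le (hm.le.trans (Nat.cast_le.2 hk))).symm
  rw [lintegral_zero] at hlim
  exact (hlim.eventually_le_const (pos_iff_ne_zero.2 hε)).exists

lemma unifFapIntegrable_comp_of_hasFapLaw [IsProbabilityMeasure ν]
    {K : Set (MSet α → unitInterval)} (hKP : K ⊆ FAPs α) (hlaw : ∀ P ∈ K, HasFapLaw P X ν)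
    {c : E → ℝ≥0∞} (hc : Measurable c) (hfinite : ∫⁻ x, c x ∂ν ≠ ⊤) :
    UnifFapIntegrable K fun ω => c (X ω) := fun ε hε => by
  obtain ⟨k, hk⟩ := exists_lintegral_tsub_natCast_le hc hfinite hε
  refine ⟨k, fun P hP => ?_⟩
  rwa [(hlaw P hP).fapIntTop_comp (hKP hP) (c := fun x => c x - k) (by fun_prop)]

end Law

section Couplings

variable {n : ℕ} {Ω : Fin n → Type*} [∀ i, MeasurableSpace (Ω i)] {μ : ∀ i, Measure (Ω i)}

lemma couplings_subset_FAPs : couplings μ ⊆ FAPs (∀ i, Ω i) := fun _ hP => hP.1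

lemma hasFapLaw_of_mem_couplings {P : MSet (∀ i, Ω i) → unitInterval} (hP : P ∈ couplings μ)
    (i : Fin n) : HasFapLaw P (fun ω => ω i) (μ i) :=
  ⟨measurable_pi_apply i, hP.2 i⟩

lemma unifFapIntegrable_comp_eval_couplings {i : Fin n} [IsProbabilityMeasure (μ i)]
    {c : Ω i → ℝ≥0∞} (hc : Measurable c) (hfinite : ∫⁻ x, c x ∂μ i ≠ ⊤) :
    UnifFapIntegrable (couplings μ) fun ω => c (ω i) :=
  have hlaw : ∀ P ∈ couplings μ, HasFapLaw P (fun ω => ω i) (μ i) :=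
    fun _ hP => hasFapLaw_of_mem_couplings hP i
  unifFapIntegrable_comp_of_hasFapLaw couplings_subset_FAPs hlaw hc hfinite

lemma isClosed_couplings : IsClosed (couplings μ) := by
  simp only [couplings, ofPred_and, ofPred_forall]
  exact isClosed_FAPs.inter <| isClosed_iInter fun i => isClosed_iInter fun B =>
    isClosed_iInter fun hB => isClosed_eq (continuous_eval _) continuous_const

end Couplings

section Martingale

variable {n : ℕ} {μ : Fin n → Measure ℝ}

/-- The functions `π_1` and `(π_{i+1} - π_i) g(π_1,…,π_i)`, for `g` bounded Borel, whose integrals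
must vanish for the coordinate process to be a martingale. -/
def martingaleTests (hn : 0 < n) : Set ((Fin n → ℝ) → ℝ) :=
  insert (fun ω => ω ⟨0, hn⟩)
    {f | ∃ (i j : Fin n) (g : (Fin n → ℝ) → ℝ), (j : ℕ) = (i : ℕ) + 1 ∧ Measurable g ∧
      (∃ C, ∀ x, |g x| ≤ C) ∧ (∀ x y : Fin n → ℝ, (∀ k ≤ i, x k = y k) → g x = g y) ∧
      f = fun ω => (ω j - ω i) * g ω}

lemma isMartFAP_iff_forall_martingaleTests (hn : 0 < n) {P : MSet (Fin n → ℝ) → unitInterval} :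
    IsMartFAP hn P ↔ (∀ i : Fin n, fapIntTop P (fun ω => ENNReal.ofReal |ω i|) < ⊤) ∧
      ∀ f ∈ martingaleTests hn, fapIntR P f = 0 := by
  refine and_congr_right fun _ => ?_
  rw [martingaleTests, forall_mem_insert]
  refine and_congr_right fun _ => ⟨?_, fun h i j hij g hg hC hd =>
    h _ ⟨i, j, g, hij, hg, hC, hd, rfl⟩⟩
  rintro h _ ⟨i, j, g, hij, hg, hC, hd, rfl⟩
  exact h i j hij g hg hC hd

lemma measurable_of_mem_martingaleTests {hn : 0 < n} {f : (Fin n → ℝ) → ℝ}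
    (hf : f ∈ martingaleTests hn) : Measurable f := by
  rcases hf with rfl | ⟨i, j, g, -, hg, -, -, rfl⟩ <;> fun_prop

lemma exists_abs_le_of_mem_martingaleTests {hn : 0 < n} {f : (Fin n → ℝ) → ℝ}
    (hf : f ∈ martingaleTests hn) :
    ∃ (m : ℕ) (i j : Fin n), ∀ ω, |f ω| ≤ m * (|ω i| + |ω j|) := by
  rcases hf with rfl | ⟨i, j, g, -, -, ⟨C, hC⟩, -, rfl⟩
  · exact ⟨1, ⟨0, hn⟩, ⟨0, hn⟩, fun ω => by simp⟩
  · obtain ⟨m, hm⟩ := exists_nat_ge C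
    refine ⟨m, j, i, fun ω => ?_⟩
    rw [abs_mul, mul_comm]
    exact mul_le_mul ((hC ω).trans hm) (abs_sub _ _) (abs_nonneg _) m.cast_nonneg

variable [∀ i, IsProbabilityMeasure (μ i)]

lemma fapIntTop_abs_of_mem_couplings {P : MSet (Fin n → ℝ) → unitInterval}
    (hP : P ∈ couplings μ) (i : Fin n) :
    fapIntTop P (fun ω => ENNReal.ofReal |ω i|) = ∫⁻ x, ENNReal.ofReal |x| ∂μ i :=
  (hasFapLaw_of_mem_couplings hP i).fapIntTop_comp (couplings_subset_FAPs hP)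
    (c := fun x => ENNReal.ofReal |x|) (by fun_prop)

lemma unifFapIntegrable_of_abs_le (hfinite : ∀ i, ∫⁻ x, ENNReal.ofReal |x| ∂μ i ≠ ⊤)
    {f : (Fin n → ℝ) → ℝ} {m : ℕ} {i j : Fin n} (hf : ∀ ω, |f ω| ≤ m * (|ω i| + |ω j|)) :
    UnifFapIntegrable (couplings μ) fun ω => ENNReal.ofReal |f ω| := by
  have hcoord : ∀ i, UnifFapIntegrable (couplings μ) fun ω => ENNReal.ofReal |ω i| := fun i =>
    unifFapIntegrable_comp_eval_couplings (μ := μ) (c := fun x => ENNReal.ofReal |x|) (by fun_prop)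
      (hfinite i)
  have hsum : UnifFapIntegrable (couplings μ)
      fun ω => ENNReal.ofReal |ω i| + ENNReal.ofReal |ω j| :=
    (hcoord i).add couplings_subset_FAPs (hcoord j) (by fun_prop) (by fun_prop)
  refine (hsum.natCast_mul couplings_subset_FAPs (by fun_prop) m).mono couplings_subset_FAPs
    fun ω => ?_
  calc ENNReal.ofReal |f ω| ≤ ENNReal.ofReal (m * (|ω i| + |ω j|)) :=
        ENNReal.ofReal_le_ofReal (hf ω)
    _ = m * (ENNReal.ofReal |ω i| + ENNReal.ofReal |ω j|) := by
        rw [ENNReal.ofReal_mul m.cast_nonneg, ENNReal.ofReal_natCast,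
          ENNReal.ofReal_add (abs_nonneg _) (abs_nonneg _)]

lemma isClosed_setOf_mem_couplings_isMartFAP (hn : 0 < n)
    (hfinite : ∀ i, ∫⁻ x, ENNReal.ofReal |x| ∂μ i ≠ ⊤) :
    IsClosed {P ∈ couplings μ | IsMartFAP hn P} := by
  have hset : {P ∈ couplings μ | IsMartFAP hn P} =
      {P ∈ couplings μ | ∀ f ∈ martingaleTests hn, fapIntR P f = 0} := by
    ext P
    refine and_congr_right fun hP => ?_
    rw [isMartFAP_iff_forall_martingaleTests]
    refine and_iff_right fun i => ?_
    rw [fapIntTop_abs_of_mem_couplings hP i]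
    exact (hfinite i).lt_top
  rw [hset]
  refine isClosed_setOf_forall_fapIntR_eq_zero isClosed_couplings couplings_subset_FAPs
    (fun f hf => measurable_of_mem_martingaleTests hf) fun f hf => ?_
  obtain ⟨m, i, j, hle⟩ := exists_abs_le_of_mem_martingaleTests hf
  exact unifFapIntegrable_of_abs_le hfinite hle

end Martingale

/-- on `Ω = ℝⁿ`, given `P* ∈ ℙ`, if
`K₃ = {P ∈ M : P ≪ P* and (π_1,…,π_n) is a P-martingale}` is nonempty, then `K₃` is
compact and there is `P ∈ K₃` with `P(c) = inf_{Q ∈ K₃} Q(c)`. -/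
theorem K3_compact_and_min
    {n : ℕ} (hn : 0 < n) (μ : Fin n → Measure ℝ) [∀ i, IsProbabilityMeasure (μ i)]
    (c : (Fin n → ℝ) → ℝ≥0∞) (hc : Measurable c)
    (Pstar : MSet (Fin n → ℝ) → unitInterval) (hPstar : IsFAP Pstar)
    (hne : ({P ∈ couplings μ | FapAC P Pstar ∧ IsMartFAP hn P}).Nonempty) :
    IsCompact {P ∈ couplings μ | FapAC P Pstar ∧ IsMartFAP hn P} ∧
      ∃ P ∈ {P ∈ couplings μ | FapAC P Pstar ∧ IsMartFAP hn P},
        fapIntTop P c =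
          ⨅ Q ∈ {P ∈ couplings μ | FapAC P Pstar ∧ IsMartFAP hn P}, fapIntTop Q c := by
  have hfinite : ∀ i, ∫⁻ x, ENNReal.ofReal |x| ∂μ i ≠ ⊤ := by
    obtain ⟨P₀, hP₀, -, hP₀int, -⟩ := hne
    intro i
    rw [← fapIntTop_abs_of_mem_couplings hP₀ i]
    exact (hP₀int i).ne
  have hclosed : IsClosed {P ∈ couplings μ | FapAC P Pstar ∧ IsMartFAP hn P} := by
    convert (isClosed_setOf_fapAC Pstar).inter (isClosed_setOf_mem_couplings_isMartFAP hn hfinite)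
      using 1
    ext P
    exact and_left_comm
  exact ⟨hclosed.isCompact, exists_fapIntTop_eq_iInf hclosed.isCompact hne
    (fun P hP => couplings_subset_FAPs hP.1) hc⟩

end FATransport
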